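/- (Proposition 3.1, 17-point case: fourth-order accuracy of the numerical wavenumber.) Fix k > 0, θ ∈ ℝ, γ > 0, b₁ ∈ ℝ with b₂ = 1 − b₁, and d₁, d₂, d₃ with d₁ + d₂ + d₃ = 1. Let e(x, z) = exp(−i·k·(x·cos θ + z·sin θ)). Let L̃ = L̃ₓ + L̃_z be the point-weighting 17-point Laplacian stencil with coefficient functions A ≡ 1 and B ≡ 1 (defined as in the optimal point-weighting 17-point scheme, with spacings h in x and γh in z and weights b₁, b₂), and let Ĩ = d₁I⁽¹⁾ + d₂I⁽²⁾ + d₃I⁽³⁾ be the weighted mass-lumping operator. For h > 0 with (Ĩe)(0, 0; h) ≠ 0, define the squared numerical wavenumber k̃_N(h)² := −(L̃e)(0, 0; h) / (Ĩe)(0, 0; h). Then there exists δ > 0 such that (Ĩe)(0, 0; h) ≠ 0 for all 0 < h < δ, and k̃_N(h)² = k² + O(h⁴) as h → 0⁺; that is, the numerical wavenumber of the optimal point-weighting 17-point scheme approximates the exact wavenumber with fourth-order accuracy. -/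

import Mathlib

noncomputable section

/-- Point-weighted value `û` at `(xo, z)` relative to the center column `xc`,
with vertical half-width `s`. -/
def hatVal (b₁ : ℝ) (u : ℝ × ℝ → ℂ) (xo xc z s : ℝ) : ℂ :=
  (b₁ : ℂ) * u (xo, z) + (((1 : ℂ) - (b₁ : ℂ)) / 2) *
    (u (xo, z + s) + u (xo, z - s) - u (xc, z - s) - u (xc, z + s))

/-- Point-weighted value `p̃` at `(x, zo)` relative to the center row `zc`,
with horizontal half-width `s`. -/
def tildeVal (b₁ : ℝ) (u : ℝ × ℝ → ℂ) (x zo zc s : ℝ) : ℂ :=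
  (b₁ : ℂ) * u (x, zo) + (((1 : ℂ) - (b₁ : ℂ)) / 2) *
    (u (x + s, zo) + u (x - s, zo) - u (x - s, zc) - u (x + s, zc))

/-- The fourth-order flux-form stencil applied to values `vm2, …, vp2`
with coefficient values `Am32, Am12, Ap12, Ap32` and step `h`. -/
def fluxStencil (Am32 Am12 Ap12 Ap32 vm2 vm1 v0 vp1 vp2 : ℂ) (h : ℝ) : ℂ :=
  (1 / (h : ℂ) ^ 2) *
    ( -(9 / 8) * Am12 * ((1 / 24) * vm2 - (9 / 8) * vm1 + (9 / 8) * v0 - (1 / 24) * vp1)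
      + (1 / 24) * Am32 * (-(11 / 12) * vm2 + (17 / 24) * vm1 + (3 / 8) * v0
          - (5 / 24) * vp1 + (1 / 24) * vp2)
      - (1 / 24) * Ap32 * (-(1 / 24) * vm2 + (5 / 24) * vm1 - (3 / 8) * v0
          - (17 / 24) * vp1 + (11 / 12) * vp2)
      + (9 / 8) * Ap12 * ((1 / 24) * vm1 - (9 / 8) * v0 + (9 / 8) * vp1 - (1 / 24) * vp2) )

/-- The x-part `L̃ₓ` of the point-weighting 17-point Laplacian stencil with A ≡ 1. -/
def LxTildeOne (b₁ γ : ℝ) (u : ℝ × ℝ → ℂ) (x z h : ℝ) : ℂ :=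
  fluxStencil 1 1 1 1
    (hatVal b₁ u (x - 2 * h) x z (2 * γ * h)) (hatVal b₁ u (x - h) x z (γ * h))
    ((b₁ : ℂ) * u (x, z))
    (hatVal b₁ u (x + h) x z (γ * h)) (hatVal b₁ u (x + 2 * h) x z (2 * γ * h)) h

/-- The z-part `L̃_z` of the point-weighting 17-point Laplacian stencil with B ≡ 1. -/
def LzTildeOne (b₁ γ : ℝ) (u : ℝ × ℝ → ℂ) (x z h : ℝ) : ℂ :=
  fluxStencil 1 1 1 1
    (tildeVal b₁ u x (z - 2 * γ * h) z (2 * h)) (tildeVal b₁ u x (z - γ * h) z h)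
    ((b₁ : ℂ) * u (x, z))
    (tildeVal b₁ u x (z + γ * h) z h) (tildeVal b₁ u x (z + 2 * γ * h) z (2 * h)) (γ * h)

/-- The orthogonal-neighbor mass-lumping operator `I⁽²⁾`. -/
def I2 (γ : ℝ) (Q : ℝ × ℝ → ℂ) (x z h : ℝ) : ℂ :=
  (1 / 3) * (Q (x - h, z) + Q (x + h, z) + Q (x, z - γ * h) + Q (x, z + γ * h))
    - (1 / 12) * (Q (x - 2 * h, z) + Q (x + 2 * h, z)
        + Q (x, z - 2 * γ * h) + Q (x, z + 2 * γ * h))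

/-- The diagonal-neighbor mass-lumping operator `I⁽³⁾`. -/
def I3 (γ : ℝ) (Q : ℝ × ℝ → ℂ) (x z h : ℝ) : ℂ :=
  (1 / 3) * (Q (x - h, z - γ * h) + Q (x + h, z + γ * h)
      + Q (x - h, z + γ * h) + Q (x + h, z - γ * h))
    - (1 / 12) * (Q (x - 2 * h, z - 2 * γ * h) + Q (x + 2 * h, z + 2 * γ * h)
        + Q (x - 2 * h, z + 2 * γ * h) + Q (x + 2 * h, z - 2 * γ * h))

/-- The weighted mass-lumping operator `Ĩ` of the point-weighting 17-point scheme. -/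
def Itilde (γ d₁ d₂ d₃ : ℝ) (Q : ℝ × ℝ → ℂ) (x z h : ℝ) : ℂ :=
  (d₁ : ℂ) * Q (x, z) + (d₂ : ℂ) * I2 γ Q x z h + (d₃ : ℂ) * I3 γ Q x z h

/-- The plane wave e(x, z) = exp(−i·k·(x·cos θ + z·sin θ)). -/
def planeWave (k θ : ℝ) (p : ℝ × ℝ) : ℂ :=
  Complex.exp (-Complex.I * (k : ℂ) * ((p.1 : ℂ) * (Real.cos θ : ℂ) + (p.2 : ℂ) * (Real.sin θ : ℂ)))

lemma nw_pw (k θ x z : ℝ) : planeWave k θ (x, z) =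
    Complex.exp (-Complex.I * ((x * (k * Real.cos θ) : ℝ) : ℂ)) *
    Complex.exp (-Complex.I * ((z * (k * Real.sin θ) : ℝ) : ℂ)) := by
  rw [planeWave, ← Complex.exp_add]
  congr 1
  push_cast
  ring

lemma nw_pw' (k θ γ h : ℝ) (m n : ℤ) (x z : ℝ) (hx : x = m * h) (hz : z = n * (γ * h)) :
    planeWave k θ (x, z) =
    Complex.exp (-Complex.I * ((h * (k * Real.cos θ) : ℝ) : ℂ)) ^ m *
    Complex.exp (-Complex.I * ((γ * h * (k * Real.sin θ) : ℝ) : ℂ)) ^ n := by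
  rw [nw_pw, ← Complex.exp_int_mul, ← Complex.exp_int_mul, hx, hz]
  push_cast
  ring_nf

lemma nw_p (t : ℝ) : (((1 - Real.cos t : ℝ)) : ℂ) =
    1 - (Complex.exp (-Complex.I * (t : ℂ)) + (Complex.exp (-Complex.I * (t : ℂ)))⁻¹) / 2 := by
  rw [← Complex.exp_neg]
  push_cast
  rw [Complex.cos]
  ring_nf

/-- numerator polynomial -/
def nwN (b p q : ℝ) : ℝ :=
  2 * p + p ^ 2 / 3 + (1 - b) * (-(4 / 3) * p * q ^ 2 - (4 / 3) * p ^ 2 * q + (2 / 3) * p ^ 2 * q ^ 2)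

lemma nw_Lx (k θ γ b h : ℝ) :
    LxTildeOne b γ (planeWave k θ) 0 0 h =
     ((-(nwN b (1 - Real.cos (h * (k * Real.cos θ)))
        (1 - Real.cos (γ * h * (k * Real.sin θ)))) / h ^ 2 : ℝ) : ℂ) := by
  unfold LxTildeOne fluxStencil hatVal nwN
  rw [nw_pw' k θ γ h (-2) 0 (0 - 2 * h) 0, nw_pw' k θ γ h (-2) 2 (0 - 2 * h) (0 + 2 * γ * h),
    nw_pw' k θ γ h (-2) (-2) (0 - 2 * h) (0 - 2 * γ * h),
    nw_pw' k θ γ h (-1) 0 (0 - h) 0, nw_pw' k θ γ h (-1) 1 (0 - h) (0 + γ * h),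
    nw_pw' k θ γ h (-1) (-1) (0 - h) (0 - γ * h),
    nw_pw' k θ γ h (2) 0 (0 + 2 * h) 0, nw_pw' k θ γ h (2) 2 (0 + 2 * h) (0 + 2 * γ * h),
    nw_pw' k θ γ h (2) (-2) (0 + 2 * h) (0 - 2 * γ * h),
    nw_pw' k θ γ h (1) 0 (0 + h) 0, nw_pw' k θ γ h (1) 1 (0 + h) (0 + γ * h),
    nw_pw' k θ γ h (1) (-1) (0 + h) (0 - γ * h),
    nw_pw' k θ γ h 0 0 0 0, nw_pw' k θ γ h 0 1 0 (0 + γ * h), nw_pw' k θ γ h 0 (-1) 0 (0 - γ * h),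
    nw_pw' k θ γ h 0 2 0 (0 + 2 * γ * h), nw_pw' k θ γ h 0 (-2) 0 (0 - 2 * γ * h)]
  · have h1 := nw_p (h * (k * Real.cos θ))
    have h2 := nw_p (γ * h * (k * Real.sin θ))
    have e1 := Complex.exp_ne_zero (-Complex.I * ((h * (k * Real.cos θ) : ℝ) : ℂ))
    have e2 := Complex.exp_ne_zero (-Complex.I * ((γ * h * (k * Real.sin θ) : ℝ) : ℂ))
    generalize 1 - Real.cos (h * (k * Real.cos θ)) = p at *
    generalize 1 - Real.cos (γ * h * (k * Real.sin θ)) = q at *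
    generalize Complex.exp (-Complex.I * ((h * (k * Real.cos θ) : ℝ) : ℂ)) = E at *
    generalize Complex.exp (-Complex.I * ((γ * h * (k * Real.sin θ) : ℝ) : ℂ)) = F at *
    rw [Complex.ofReal_div, Complex.ofReal_pow, one_div, mul_comm, ← div_eq_mul_inv]
    congr 1
    push_cast
    rw [h1, h2]
    simp only [zpow_neg, zpow_zero, zpow_one, zpow_ofNat]
    field_simp
    ring
  all_goals (push_cast; ring)

lemma nw_Lz (k θ γ b h : ℝ) :
    LzTildeOne b γ (planeWave k θ) 0 0 h =
     ((-(nwN b (1 - Real.cos (γ * h * (k * Real.sin θ)))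
        (1 - Real.cos (h * (k * Real.cos θ)))) / (γ * h) ^ 2 : ℝ) : ℂ) := by
  unfold LzTildeOne fluxStencil tildeVal nwN
  rw [nw_pw' k θ γ h (-2) 0 (0 - 2 * h) 0, nw_pw' k θ γ h (-2) 2 (0 - 2 * h) (0 + 2 * γ * h),
    nw_pw' k θ γ h (-2) (-2) (0 - 2 * h) (0 - 2 * γ * h),
    nw_pw' k θ γ h (-1) 0 (0 - h) 0, nw_pw' k θ γ h (-1) 1 (0 - h) (0 + γ * h),
    nw_pw' k θ γ h (-1) (-1) (0 - h) (0 - γ * h),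
    nw_pw' k θ γ h (2) 0 (0 + 2 * h) 0, nw_pw' k θ γ h (2) 2 (0 + 2 * h) (0 + 2 * γ * h),
    nw_pw' k θ γ h (2) (-2) (0 + 2 * h) (0 - 2 * γ * h),
    nw_pw' k θ γ h (1) 0 (0 + h) 0, nw_pw' k θ γ h (1) 1 (0 + h) (0 + γ * h),
    nw_pw' k θ γ h (1) (-1) (0 + h) (0 - γ * h),
    nw_pw' k θ γ h 0 0 0 0, nw_pw' k θ γ h 0 1 0 (0 + γ * h), nw_pw' k θ γ h 0 (-1) 0 (0 - γ * h),
    nw_pw' k θ γ h 0 2 0 (0 + 2 * γ * h), nw_pw' k θ γ h 0 (-2) 0 (0 - 2 * γ * h)]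
  · have h1 := nw_p (h * (k * Real.cos θ))
    have h2 := nw_p (γ * h * (k * Real.sin θ))
    have e1 := Complex.exp_ne_zero (-Complex.I * ((h * (k * Real.cos θ) : ℝ) : ℂ))
    have e2 := Complex.exp_ne_zero (-Complex.I * ((γ * h * (k * Real.sin θ) : ℝ) : ℂ))
    generalize 1 - Real.cos (h * (k * Real.cos θ)) = p at *
    generalize 1 - Real.cos (γ * h * (k * Real.sin θ)) = q at *
    generalize Complex.exp (-Complex.I * ((h * (k * Real.cos θ) : ℝ) : ℂ)) = E at *
    generalize Complex.exp (-Complex.I * ((γ * h * (k * Real.sin θ) : ℝ) : ℂ)) = F at *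
    rw [Complex.ofReal_div, Complex.ofReal_pow, one_div, mul_comm, ← div_eq_mul_inv]
    congr 1
    push_cast
    rw [h1, h2]
    simp only [zpow_neg, zpow_zero, zpow_one, zpow_ofNat]
    field_simp
    ring
  all_goals (push_cast; ring)

/-- mass-lumping remainder -/
def nwJ (d2 d3 p q : ℝ) : ℝ :=
  d2 * (-(1 / 3) * p ^ 2 - (1 / 3) * q ^ 2) +
  d3 * (-4 * p * q - (2 / 3) * p ^ 2 - (2 / 3) * q ^ 2 + (8 / 3) * p ^ 2 * q + (8 / 3) * p * q ^ 2
    - (4 / 3) * p ^ 2 * q ^ 2)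

lemma nw_I (k θ γ d₁ d₂ d₃ h : ℝ) (hd : d₁ + d₂ + d₃ = 1) :
    Itilde γ d₁ d₂ d₃ (planeWave k θ) 0 0 h =
     ((1 + nwJ d₂ d₃ (1 - Real.cos (h * (k * Real.cos θ)))
        (1 - Real.cos (γ * h * (k * Real.sin θ))) : ℝ) : ℂ) := by
  obtain rfl : d₁ = 1 - d₂ - d₃ := by linarith
  unfold Itilde I2 I3 nwJ
  rw [nw_pw' k θ γ h (-2) 0 (0 - 2 * h) 0, nw_pw' k θ γ h (-2) 2 (0 - 2 * h) (0 + 2 * γ * h),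
    nw_pw' k θ γ h (-2) (-2) (0 - 2 * h) (0 - 2 * γ * h),
    nw_pw' k θ γ h (-1) 0 (0 - h) 0, nw_pw' k θ γ h (-1) 1 (0 - h) (0 + γ * h),
    nw_pw' k θ γ h (-1) (-1) (0 - h) (0 - γ * h),
    nw_pw' k θ γ h (2) 0 (0 + 2 * h) 0, nw_pw' k θ γ h (2) 2 (0 + 2 * h) (0 + 2 * γ * h),
    nw_pw' k θ γ h (2) (-2) (0 + 2 * h) (0 - 2 * γ * h),
    nw_pw' k θ γ h (1) 0 (0 + h) 0, nw_pw' k θ γ h (1) 1 (0 + h) (0 + γ * h),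
    nw_pw' k θ γ h (1) (-1) (0 + h) (0 - γ * h),
    nw_pw' k θ γ h 0 0 0 0, nw_pw' k θ γ h 0 1 0 (0 + γ * h), nw_pw' k θ γ h 0 (-1) 0 (0 - γ * h),
    nw_pw' k θ γ h 0 2 0 (0 + 2 * γ * h), nw_pw' k θ γ h 0 (-2) 0 (0 - 2 * γ * h)]
  · have h1 := nw_p (h * (k * Real.cos θ))
    have h2 := nw_p (γ * h * (k * Real.sin θ))
    have e1 := Complex.exp_ne_zero (-Complex.I * ((h * (k * Real.cos θ) : ℝ) : ℂ))
    have e2 := Complex.exp_ne_zero (-Complex.I * ((γ * h * (k * Real.sin θ) : ℝ) : ℂ))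
    generalize 1 - Real.cos (h * (k * Real.cos θ)) = p at *
    generalize 1 - Real.cos (γ * h * (k * Real.sin θ)) = q at *
    generalize Complex.exp (-Complex.I * ((h * (k * Real.cos θ) : ℝ) : ℂ)) = E at *
    generalize Complex.exp (-Complex.I * ((γ * h * (k * Real.sin θ) : ℝ) : ℂ)) = F at *
    push_cast
    rw [h1, h2]
    simp only [zpow_neg, zpow_zero, zpow_one, zpow_ofNat]
    field_simp
    ring
  all_goals (push_cast; ring)

lemma nw_cos (x : ℝ) (hx : |x| ≤ 1) :
    |Real.cos x - (1 - x ^ 2 / 2 + x ^ 4 / 24)| ≤ |x| ^ 6 := by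
  have h := Complex.exp_bound (x := x * Complex.I) (by simpa using hx) (n := 6) (by norm_num)
  have h2 := (Complex.abs_re_le_norm _).trans h
  have e : (Complex.exp (x * Complex.I) -
      ∑ m ∈ Finset.range 6, (x * Complex.I) ^ m / (m.factorial : ℂ)).re =
      Real.cos x - (1 - x ^ 2 / 2 + x ^ 4 / 24) := by
    rw [Complex.sub_re, Complex.exp_ofReal_mul_I_re]
    congr 1
    have : ∑ m ∈ Finset.range 6, (x * Complex.I) ^ m / (m.factorial : ℂ) =
      ((1 - x ^ 2 / 2 + x ^ 4 / 24 : ℝ) : ℂ) + ((x - x ^ 3 / 6 + x ^ 5 / 120 : ℝ) : ℂ) * Complex.I := by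
      simp only [Finset.sum_range_succ, Finset.sum_range_zero, Nat.factorial]
      have i2 : Complex.I ^ 2 = -1 := Complex.I_sq
      have i3 : Complex.I ^ 3 = -Complex.I := Complex.I_pow_three
      have i4 : Complex.I ^ 4 = 1 := Complex.I_pow_four
      have i5 : Complex.I ^ 5 = Complex.I := by rw [pow_succ, i4, one_mul]
      simp only [mul_pow, i2, i3, i4, i5]
      push_cast
      ring
    rw [this]
    simp only [Complex.add_re, Complex.ofReal_re, Complex.re_ofReal_mul, Complex.I_re, mul_zero, add_zero]
  rw [e] at h2
  refine h2.trans ?_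
  have : ‖(x : ℂ) * Complex.I‖ = |x| := by simp
  rw [this]
  have : 0 ≤ |x| ^ 6 := by positivity
  norm_num [Nat.factorial]
  nlinarith

lemma nw_f (x : ℝ) (hx : |x| ≤ 1) :
    |2 * (1 - Real.cos x) + (1 - Real.cos x) ^ 2 / 3 - x ^ 2| ≤ 5 * |x| ^ 6 := by
  have h := nw_cos x hx
  set r := Real.cos x - (1 - x ^ 2 / 2 + x ^ 4 / 24) with hr
  have hc : Real.cos x = (1 - x ^ 2 / 2 + x ^ 4 / 24) + r := by rw [hr]; ring
  have e : 2 * (1 - Real.cos x) + (1 - Real.cos x) ^ 2 / 3 - x ^ 2 =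
     -2 * r + (1 / 3) * ((-x ^ 4 / 24 - r) * (x ^ 2 - x ^ 4 / 24 - r)) := by
    rw [hc]; ring
  have a0 := abs_nonneg x
  have h64 : |x| ^ 6 ≤ |x| ^ 4 := pow_le_pow_of_le_one a0 hx (by norm_num)
  have h42 : |x| ^ 4 ≤ |x| ^ 2 := pow_le_pow_of_le_one a0 hx (by norm_num)
  have p4 : |x ^ 4| = |x| ^ 4 := abs_pow x 4
  have p2 : |x ^ 2| = |x| ^ 2 := abs_pow x 2
  have h4 : 0 ≤ |x| ^ 4 := by positivity
  have b1 : |-x ^ 4 / 24 - r| ≤ 2 * |x| ^ 4 := by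
    rw [abs_le] at *
    simp only [← p4, ← p2, abs_of_nonneg (by positivity : 0 ≤ x ^ 4), abs_of_nonneg (by positivity : 0 ≤ x ^ 2)] at *
    constructor <;> linarith
  have b2 : |x ^ 2 - x ^ 4 / 24 - r| ≤ 3 * |x| ^ 2 := by
    rw [abs_le] at *
    simp only [← p4, ← p2, abs_of_nonneg (by positivity : 0 ≤ x ^ 4), abs_of_nonneg (by positivity : 0 ≤ x ^ 2)] at *
    constructor <;> linarith
  rw [e]
  have := abs_add_le (-2 * r) ((1 / 3) * ((-x ^ 4 / 24 - r) * (x ^ 2 - x ^ 4 / 24 - r)))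
  have b3 : |(1 / 3) * ((-x ^ 4 / 24 - r) * (x ^ 2 - x ^ 4 / 24 - r))| ≤ 2 * |x| ^ 6 := by
    rw [abs_mul, abs_mul, abs_of_pos (by norm_num : (0:ℝ) < 1 / 3)]
    have := mul_le_mul b1 b2 (abs_nonneg _) (by positivity)
    calc _ ≤ 1 / 3 * (2 * |x| ^ 4 * (3 * |x| ^ 2)) := by gcongr
      _ = _ := by ring
  have b4 : |-2 * r| ≤ 2 * |x| ^ 6 := by
    rw [abs_mul]; norm_num; exact h
  have : 0 ≤ |x| ^ 6 := by positivity
  linarith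

open Filter Topology Asymptotics in
lemma nw_pO (a : ℝ) : (fun h : ℝ => 1 - Real.cos (h * a)) =O[𝓝[>] 0] fun h : ℝ => h ^ 2 := by
  refine IsBigO.of_bound (a ^ 2 / 2) (Eventually.of_forall fun h => ?_)
  rw [Real.norm_of_nonneg (by linarith [Real.cos_le_one (h * a)]), Real.norm_of_nonneg (by positivity)]
  have := Real.one_sub_sq_div_two_le_cos (x := h * a)
  nlinarith

open Filter Topology Asymptotics in
lemma nw_fO (a : ℝ) : (fun h : ℝ => 2 * (1 - Real.cos (h * a)) + (1 - Real.cos (h * a)) ^ 2 / 3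
    - (h * a) ^ 2) =O[𝓝[>] 0] fun h : ℝ => h ^ 6 := by
  refine IsBigO.of_bound (5 * |a| ^ 6) ?_
  have : ∀ᶠ h : ℝ in 𝓝 0, |h * a| < 1 := by
    have c : ContinuousAt (fun h : ℝ => |h * a|) 0 := by fun_prop
    exact c.eventually_lt_const (by simp)
  filter_upwards [this.filter_mono nhdsWithin_le_nhds] with h hh
  have := nw_f _ hh.le
  rw [Real.norm_eq_abs, Real.norm_eq_abs, abs_pow]
  rw [abs_mul h a, mul_pow |h|] at this
  linarith

open Filter Topology Asymptotics in
lemma nw_mono (p q : ℝ → ℝ) (c : ℝ) (i j m : ℕ) (hm : m ≤ 2 * (i + j))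
    (hp : p =O[𝓝[>] 0] fun h : ℝ => h ^ 2) (hq : q =O[𝓝[>] 0] fun h : ℝ => h ^ 2) :
    (fun h => c * (p h ^ i * q h ^ j)) =O[𝓝[>] 0] fun h : ℝ => h ^ m := by
  have h1 := (((hp.pow i).mul (hq.pow j)).const_mul_left c)
  refine h1.trans ?_
  have e : (fun h : ℝ => (h ^ 2) ^ i * (h ^ 2) ^ j) = fun h : ℝ => h ^ (2 * (i + j)) := by
    funext h; rw [← pow_mul, ← pow_mul, ← pow_add]; ring_nf
  rw [e]
  refine IsBigO.of_bound 1 ?_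
  have : ∀ᶠ h : ℝ in 𝓝[>] 0, h < 1 := (eventually_lt_nhds (by norm_num)).filter_mono nhdsWithin_le_nhds
  filter_upwards [this, self_mem_nhdsWithin] with h h1 h0
  have h0 : 0 < h := h0
  rw [Real.norm_of_nonneg (by positivity), Real.norm_of_nonneg (by positivity), one_mul]
  exact pow_le_pow_of_le_one h0.le h1.le hm

open Filter Topology Asymptotics in
lemma nw_NO (b a c : ℝ) : (fun h : ℝ => nwN b (1 - Real.cos (h * a)) (1 - Real.cos (h * c)) / h ^ 2
    - a ^ 2) =O[𝓝[>] 0] fun h : ℝ => h ^ 4 := by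
  have hp := nw_pO a
  have hq := nw_pO c
  have H := (((nw_fO a).add (nw_mono _ _ ((1 - b) * (-(4 / 3))) 1 2 6 (by norm_num) hp hq)).add
    (nw_mono _ _ ((1 - b) * (-(4 / 3))) 2 1 6 (by norm_num) hp hq)).add
    (nw_mono _ _ ((1 - b) * (2 / 3)) 2 2 6 (by norm_num) hp hq)
  have H2 := H.mul (isBigO_refl (fun h : ℝ => (h ^ 2)⁻¹) (𝓝[>] 0))
  refine H2.congr' ?_ ?_
  all_goals
    filter_upwards [self_mem_nhdsWithin] with h h0
    have h0 : h ≠ 0 := ne_of_gt h0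
    try unfold nwN
    field_simp
  ring

open Filter Topology Asymptotics in
lemma nw_JO (d2 d3 a c : ℝ) : (fun h : ℝ => nwJ d2 d3 (1 - Real.cos (h * a)) (1 - Real.cos (h * c)))
     =O[𝓝[>] 0] fun h : ℝ => h ^ 4 := by
  have hp := nw_pO a
  have hq := nw_pO c
  have H := (((((nw_mono _ _ (-d2 / 3 - 2 * d3 / 3) 2 0 4 (by norm_num) hp hq).add
    (nw_mono _ _ (-d2 / 3 - 2 * d3 / 3) 0 2 4 (by norm_num) hp hq)).add
    (nw_mono _ _ (-4 * d3) 1 1 4 (by norm_num) hp hq)).add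
    (nw_mono _ _ (8 / 3 * d3) 2 1 4 (by norm_num) hp hq)).add
    (nw_mono _ _ (8 / 3 * d3) 1 2 4 (by norm_num) hp hq)).add
    (nw_mono _ _ (-(4 / 3) * d3) 2 2 4 (by norm_num) hp hq)
  refine H.congr_left fun h => ?_
  unfold nwJ
  ring

/-- Proposition 3.1, 17-point case: the numerical wavenumber of
the optimal point-weighting 17-point scheme approximates the exact wavenumber
with fourth-order accuracy. -/
theorem numericalWavenumber17_fourth_order
    (k θ γ : ℝ) (hk : 0 < k) (hγ : 0 < γ) (b₁ : ℝ)
    (d₁ d₂ d₃ : ℝ) (hd : d₁ + d₂ + d₃ = 1) :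
    ∃ M δ : ℝ, 0 < M ∧ 0 < δ ∧ ∀ h : ℝ, 0 < h → h < δ →
      Itilde γ d₁ d₂ d₃ (planeWave k θ) 0 0 h ≠ 0 ∧
      ‖-(LxTildeOne b₁ γ (planeWave k θ) 0 0 h + LzTildeOne b₁ γ (planeWave k θ) 0 0 h)
            / Itilde γ d₁ d₂ d₃ (planeWave k θ) 0 0 h
          - ((k : ℂ)) ^ 2‖ ≤ M * h ^ 4 := by
  have hJ := nw_JO d₂ d₃ (k * Real.cos θ) (γ * (k * Real.sin θ))
  have hX := nw_NO b₁ (k * Real.cos θ) (γ * (k * Real.sin θ))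
  have hZ := nw_NO b₁ (γ * (k * Real.sin θ)) (k * Real.cos θ)
  have hE := (hX.add (hZ.const_mul_left (1 / γ ^ 2))).sub (hJ.const_mul_left (k ^ 2))
  obtain ⟨C, hC, hCb⟩ := hE.exists_pos
  have hJ0 := hJ.trans_tendsto (by
    have c : ContinuousAt (fun h : ℝ => h ^ 4) 0 := by fun_prop
    have := c.tendsto
    simp only [ne_eq, OfNat.ofNat_ne_zero, not_false_eq_true, zero_pow] at this
    exact this.mono_left nhdsWithin_le_nhds)
  have hJ1 := hJ0.eventually (Metric.ball_mem_nhds (0 : ℝ) (by norm_num : (0 : ℝ) < 1 / 2))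
  have hev := hCb.bound.and hJ1
  rw [eventually_nhdsWithin_iff, Metric.eventually_nhds_iff] at hev
  obtain ⟨δ, hδ, hall⟩ := hev
  refine ⟨2 * C, δ, by positivity, hδ, fun h h0 hlt => ?_⟩
  obtain ⟨hb, hj⟩ := hall (y := h) (by rw [Real.dist_eq, sub_zero, abs_of_pos h0]; exact hlt) h0
  have eY : γ * h * (k * Real.sin θ) = h * (γ * (k * Real.sin θ)) := by ring
  rw [nw_Lx, nw_Lz, nw_I _ _ _ _ _ _ _ hd, eY]
  have hs := Real.sin_sq_add_cos_sq θ
  generalize nwJ d₂ d₃ (1 - Real.cos (h * (k * Real.cos θ)))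
    (1 - Real.cos (h * (γ * (k * Real.sin θ)))) = J at *
  generalize nwN b₁ (1 - Real.cos (h * (k * Real.cos θ)))
    (1 - Real.cos (h * (γ * (k * Real.sin θ)))) = N1 at *
  generalize nwN b₁ (1 - Real.cos (h * (γ * (k * Real.sin θ))))
    (1 - Real.cos (h * (k * Real.cos θ))) = N2 at *
  rw [Real.dist_eq, sub_zero, abs_lt] at hj
  have hI : 1 / 2 ≤ 1 + J := by linarith [hj.1]
  refine ⟨by rw [Complex.ofReal_ne_zero]; linarith, ?_⟩
  have hI0 : 0 < 1 + J := by linarith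
  rw [← Complex.ofReal_add, ← Complex.ofReal_neg, ← Complex.ofReal_div, ← Complex.ofReal_pow,
    ← Complex.ofReal_sub, Complex.norm_real]
  have e : -(-N1 / h ^ 2 + -N2 / (γ * h) ^ 2) / (1 + J) - k ^ 2 =
      (N1 / h ^ 2 - (k * Real.cos θ) ^ 2 + 1 / γ ^ 2 * (N2 / h ^ 2 - (γ * (k * Real.sin θ)) ^ 2)
        - k ^ 2 * J) / (1 + J) := by
    have hc : Real.cos θ ^ 2 = 1 - Real.sin θ ^ 2 := by linarith
    have hI' := hI0.ne'
    simp only [mul_pow, hc]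
    field_simp
    ring
  rw [e, norm_div, Real.norm_of_nonneg hI0.le, div_le_iff₀ hI0]
  refine hb.trans ?_
  rw [Real.norm_of_nonneg (by positivity)]
  have : 0 ≤ C * h ^ 4 := by positivity
  nlinarith

end
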